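/- arXiv:1311.2011 — 2 statements merged into one kernel-verified Lean document; each statement's English description precedes it below -/
import Mathlib

section
/- Let X be a Tychonoff topological space. If there exists a bornology 𝔅 with compact base on X such that C_𝔅(X) is productively countably tight, then X is an Alster space. -/
open Set Topology

universe u

/-- A bornology on `X`: a collection of subsets covering `X`, closed under
taking subsets and under finite unions. -/
structure IsBornology {X : Type*} (𝔅 : Set (Set X)) : Prop where
  covers : ⋃₀ 𝔅 = Set.univ
  empty_mem : ∅ ∈ 𝔅
  subset_mem : ∀ ⦃A B : Set X⦄, B ∈ 𝔅 → A ⊆ B → A ∈ 𝔅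
  union_mem : ∀ ⦃A B : Set X⦄, A ∈ 𝔅 → B ∈ 𝔅 → A ∪ B ∈ 𝔅

/-- `𝔅` has a compact base: every member of `𝔅` is contained in a compact member of `𝔅`. -/
def HasCompactBase {X : Type*} [TopologicalSpace X] (𝔅 : Set (Set X)) : Prop :=
  ∀ B ∈ 𝔅, ∃ K ∈ 𝔅, IsCompact K ∧ B ⊆ K

/-- The set of continuous real-valued functions on `X` (as a bare type, to be
topologized by a bornology). -/
def CFn (X : Type u) [TopologicalSpace X] : Type u := {f : X → ℝ // Continuous f}

/-- The zero function as an element of `CFn X`. -/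
def zeroFn (X : Type u) [TopologicalSpace X] : CFn X := ⟨fun _ => 0, continuous_const⟩

/-- The basic "ball" `⟨B, ε⟩[f] = {g : ∀ x ∈ B, |f x − g x| < ε}`. -/
def unifBall {X : Type u} [TopologicalSpace X] (f : CFn X) (B : Set X) (ε : ℝ) :
    Set (CFn X) :=
  {g | ∀ x ∈ B, |f.1 x - g.1 x| < ε}

/-- The topology of uniform convergence on members of a bornology `𝔅`:
a set is open iff around each of its points it contains a basic ball
`⟨B, ε⟩[f]` with `B ∈ 𝔅`, `ε > 0`.  This makes `CFn X` into `C_𝔅(X)`. -/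
def bornTopology {X : Type u} [TopologicalSpace X] (𝔅 : Set (Set X))
    (hB : IsBornology 𝔅) : TopologicalSpace (CFn X) where
  IsOpen U := ∀ f ∈ U, ∃ B ∈ 𝔅, ∃ ε > (0 : ℝ), unifBall f B ε ⊆ U
  isOpen_univ := fun f _ => ⟨∅, hB.empty_mem, 1, one_pos, fun _ _ => trivial⟩
  isOpen_inter := by
    intro U V hU hV f hf
    obtain ⟨B₁, hB₁, ε₁, hε₁, h₁⟩ := hU f hf.1
    obtain ⟨B₂, hB₂, ε₂, hε₂, h₂⟩ := hV f hf.2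
    refine ⟨B₁ ∪ B₂, hB.union_mem hB₁ hB₂, min ε₁ ε₂, lt_min hε₁ hε₂, fun g hg => ⟨?_, ?_⟩⟩
    · exact h₁ fun x hx => lt_of_lt_of_le (hg x (Or.inl hx)) (min_le_left _ _)
    · exact h₂ fun x hx => lt_of_lt_of_le (hg x (Or.inr hx)) (min_le_right _ _)
  isOpen_sUnion := by
    intro S hS f hf
    obtain ⟨U, hU, hfU⟩ := hf
    obtain ⟨B, hB', ε, hε, h⟩ := hS U hU f hfU
    exact ⟨B, hB', ε, hε, h.trans (Set.subset_sUnion_of_mem hU)⟩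

/-- `Ω_z`: the family of all subsets of `Z ∖ {z}` having `z` in their closure. -/
def OmegaAt {Z : Type*} [TopologicalSpace Z] (z : Z) : Set (Set Z) :=
  {A | A ⊆ {z}ᶜ ∧ z ∈ closure A}

/-- `𝒢` is a `𝔅`-cover of `X`: every member of `𝔅` is contained in a member of `𝒢`. -/
def IsBCover {X : Type*} (𝔅 : Set (Set X)) (𝒢 : Set (Set X)) : Prop :=
  ∀ B ∈ 𝔅, ∃ G ∈ 𝒢, B ⊆ G

/-- `𝒪_𝔅`: the family of all open `𝔅`-covers of `X`. -/
def OpenBCovers {X : Type*} [TopologicalSpace X] (𝔅 : Set (Set X)) : Set (Set (Set X)) :=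
  {𝒰 | (∀ U ∈ 𝒰, IsOpen U) ∧ IsBCover 𝔅 𝒰}

/-- `𝒢` is a K-cover of `X`: every compact subset of `X` is contained in a member of `𝒢`. -/
def IsKCover {X : Type*} [TopologicalSpace X] (𝒢 : Set (Set X)) : Prop :=
  ∀ K : Set X, IsCompact K → ∃ G ∈ 𝒢, K ⊆ G

/-- `𝒦`: the family of all open K-covers of `X`. -/
def KCovers (X : Type*) [TopologicalSpace X] : Set (Set (Set X)) :=
  {𝒰 | (∀ U ∈ 𝒰, IsOpen U) ∧ IsKCover 𝒰}

/-- Player II has a winning strategy in the game `G₁(𝒜, 𝒞)` (of length `ω`):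
a function assigning to each finite sequence `(A₀, …, Aₙ)` of moves of player I an
element of `Aₙ`, such that in any play following it the chosen points form a member of `𝒞`. -/
def G1WinII {T : Type*} (𝒜 𝒞 : Set (Set T)) : Prop :=
  ∃ σ : (n : ℕ) → (Fin (n + 1) → Set T) → T,
    (∀ (n : ℕ) (h : Fin (n + 1) → Set T), (∀ i, h i ∈ 𝒜) → σ n h ∈ h (Fin.last n)) ∧
    ∀ A : ℕ → Set T, (∀ n, A n ∈ 𝒜) →
      (Set.range fun n => σ n fun i => A i.1) ∈ 𝒞

/-- Player II has a winning strategy in the transfinite game `G₁^α(𝒜, 𝒞)` of length `α`. -/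
def G1WinIIOrd {T : Type*} (α : Ordinal.{0}) (𝒜 𝒞 : Set (Set T)) : Prop :=
  ∃ σ : (γ : {γ : Ordinal.{0} // γ < α}) → ({δ : Ordinal.{0} // δ ≤ γ.1} → Set T) → T,
    (∀ (γ : {γ : Ordinal.{0} // γ < α}) (h : {δ : Ordinal.{0} // δ ≤ γ.1} → Set T),
      (∀ δ, h δ ∈ 𝒜) → σ γ h ∈ h ⟨γ.1, le_rfl⟩) ∧
    ∀ A : {γ : Ordinal.{0} // γ < α} → Set T, (∀ γ, A γ ∈ 𝒜) →
      (Set.range fun γ : {γ : Ordinal.{0} // γ < α} =>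
        σ γ fun δ => A ⟨δ.1, lt_of_le_of_lt δ.2 γ.2⟩) ∈ 𝒞

/-- The selection principle `S₁(𝒜, 𝒞)`. -/
def S1 {T : Type*} (𝒜 𝒞 : Set (Set T)) : Prop :=
  ∀ A : ℕ → Set T, (∀ n, A n ∈ 𝒜) →
    ∃ a : ℕ → T, (∀ n, a n ∈ A n) ∧ Set.range a ∈ 𝒞

/-- `Z` has countable tightness. -/
def CountablyTight (Z : Type*) [TopologicalSpace Z] : Prop :=
  ∀ (z : Z) (A : Set Z), z ∈ closure A → ∃ B ⊆ A, B.Countable ∧ z ∈ closure B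

/-- `Z` is productively countably tight: `Z × Y` has countable tightness
for every countably tight space `Y`. -/
def ProductivelyCountablyTight (Z : Type u) [TopologicalSpace Z] : Prop :=
  ∀ (Y : Type u) [TopologicalSpace Y], CountablyTight Y → CountablyTight (Z × Y)

/-- `Z` has tightness at most `κ`. -/
def TightnessLE (Z : Type u) [TopologicalSpace Z] (κ : Cardinal.{u}) : Prop :=
  ∀ (z : Z) (A : Set Z), z ∈ closure A → ∃ B ⊆ A, Cardinal.mk B ≤ κ ∧ z ∈ closure B

/-- `κ ∈ Sp(Z)`: for every space `Y` of tightness at most `κ`, the product `Z × Y`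
has tightness at most `κ`. -/
def MemSp (Z : Type u) [TopologicalSpace Z] (κ : Cardinal.{u}) : Prop :=
  ∀ (Y : Type u) [TopologicalSpace Y], TightnessLE Y κ → TightnessLE (Z × Y) κ

/-- `G` is a `G_κ`-set: an intersection of at most `κ` open sets. -/
def IsGKappaSet {X : Type u} [TopologicalSpace X] (κ : Cardinal.{u}) (G : Set X) : Prop :=
  ∃ 𝒪 : Set (Set X), (∀ O ∈ 𝒪, IsOpen O) ∧ Cardinal.mk 𝒪 ≤ κ ∧ G = ⋂₀ 𝒪

/-- `G` is a `G_δ`-set: an intersection of countably many open sets. -/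
def IsGDeltaSet {X : Type*} [TopologicalSpace X] (G : Set X) : Prop :=
  ∃ 𝒪 : Set (Set X), (∀ O ∈ 𝒪, IsOpen O) ∧ 𝒪.Countable ∧ G = ⋂₀ 𝒪

/-- A family `ℙ` of collections of subsets of `Z` is `κ`-singular at `z`. -/
def KappaSingularAt {Z : Type u} [TopologicalSpace Z] (κ : Cardinal.{u})
    (ℙ : Set (Set (Set Z))) (z : Z) : Prop :=
  (∀ ξ ∈ ℙ, ∀ A ∈ ξ, Cardinal.mk A ≤ κ) ∧
  (∀ ξ ∈ ℙ, ∀ F : Finset (Set Z), ↑F ⊆ ξ → (⋂₀ (F : Set (Set Z))).Nonempty) ∧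
  (∀ O : Set Z, IsOpen O → z ∈ O → ∃ ξ ∈ ℙ, ∃ A ∈ ξ, A ⊆ O) ∧
  (∀ ℰ ⊆ ℙ, Cardinal.mk ℰ ≤ κ → ∃ c : Set (Set Z) → Set Z,
    (∀ ξ ∈ ℰ, c ξ ∈ ξ) ∧ z ∉ closure (⋃ ξ ∈ ℰ, c ξ))

/-- `X` is an Alster space. -/
def Alster (X : Type*) [TopologicalSpace X] : Prop :=
  ∀ 𝒢 : Set (Set X), (∀ G ∈ 𝒢, IsGDeltaSet G) → IsKCover 𝒢 →
    ∃ 𝒢' ⊆ 𝒢, 𝒢'.Countable ∧ ⋃₀ 𝒢' = Set.univ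

/-- `X` is strongly Alster. -/
def StronglyAlster (X : Type*) [TopologicalSpace X] : Prop :=
  ∀ 𝒢 : Set (Set X), (∀ G ∈ 𝒢, IsGDeltaSet G) → IsKCover 𝒢 →
    ∃ 𝒢' ⊆ 𝒢, 𝒢'.Countable ∧ IsKCover 𝒢'

/-- `X` is productively Lindelöf. -/
def ProductivelyLindelof (X : Type u) [TopologicalSpace X] : Prop :=
  ∀ (Y : Type u) [TopologicalSpace Y], LindelofSpace Y → LindelofSpace (X × Y)

/-- `X` is hemicompact. -/
def Hemicompact (X : Type*) [TopologicalSpace X] : Prop :=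
  ∃ K : ℕ → Set X, (∀ n, IsCompact (K n)) ∧ ∀ C : Set X, IsCompact C → ∃ n, C ⊆ K n

/-!
For a compact `K` contained in a `G_δ`-set `G`, complete regularity gives continuous functions
`f 0, f 1, …` vanishing on `K` such that every point outside `G` satisfies `f n x = 1` eventually.
Attach such a sequence to each member `B` of the bornology, with `B ⊆ K ⊆ G`, and place its `n`-th
term over the `n`-th point of the `B`-th spine of a sequential fan. The pair of the zero function
and the vertex is then in the closure of these points. The fan is Fréchet–Urysohn, so `C_𝔅(X)`
times the fan is countably tight, and countably many spines suffice. Their sets `G` cover `X`: for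
each `x` the neighbourhood `{g | g x < 1}` of zero must contain infinitely many terms from one of
these spines, which is impossible if `x` lies outside its `G`.
-/

open Filter

/-- The sequential fan with spines indexed by `ι`: convergent sequences `point i 0, point i 1, …`,
one for each `i : ι`, glued at their common limit `vertex`. All points but `vertex` are isolated. It
serves as the countably tight test factor `Y` in products `Z × Y`. -/
inductive SequentialFan (ι : Type*)
  | vertex
  | point (i : ι) (n : ℕ)

namespace SequentialFan

variable {ι : Type*}

instance : TopologicalSpace (SequentialFan ι) :=
  nhdsAdjoint vertex (⨆ i, map (point i) atTop)

theorem frequently_nhds_vertex {p : SequentialFan ι → Prop} :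
    (∃ᶠ y in 𝓝 vertex, p y) ↔ p vertex ∨ ∃ i, ∃ᶠ n in atTop, p (point i n) := by
  rw [nhds_nhdsAdjoint_same]
  simp only [frequently_sup, frequently_pure, frequently_iSup, frequently_map]

theorem nhds_point (i : ι) (n : ℕ) : 𝓝 (point i n) = pure (point i n) :=
  nhds_nhdsAdjoint_of_ne _ nofun

theorem tendsto_point (i : ι) : Tendsto (point i) atTop (𝓝 vertex) := by
  rw [nhds_nhdsAdjoint_same]
  exact (le_iSup (fun i ↦ map (point i) atTop) i).trans le_sup_right

instance : FrechetUrysohnSpace (SequentialFan ι) where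
  closure_subset_seqClosure s a ha := by
    rw [mem_closure_iff_frequently] at ha
    cases a with
    | vertex =>
      obtain hs | ⟨i, hi⟩ := frequently_nhds_vertex.1 ha
      · exact subset_seqClosure hs
      · obtain ⟨φ, hφ, hs⟩ := extraction_of_frequently_atTop hi
        exact ⟨point i ∘ φ, hs, (tendsto_point i).comp hφ.tendsto_atTop⟩
    | point i n =>
      rw [nhds_point, frequently_pure] at ha
      exact subset_seqClosure ha

end SequentialFan

theorem countablyTight_of_frechetUrysohnSpace (Z : Type*) [TopologicalSpace Z]
    [FrechetUrysohnSpace Z] : CountablyTight Z := by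
  intro z A hz
  obtain ⟨u, huA, hu⟩ := mem_closure_iff_seq_limit.1 hz
  exact ⟨range u, range_subset_iff.2 huA, countable_range u,
    mem_closure_of_tendsto hu (.of_forall mem_range_self)⟩

theorem prodMk_mem_closure_iff {Y Z : Type*} [TopologicalSpace Y] [TopologicalSpace Z]
    {z : Z} {y : Y} {A : Set (Z × Y)} :
    (z, y) ∈ closure A ↔ ∀ U ∈ 𝓝 z, ∃ᶠ w in 𝓝 y, ∃ u ∈ U, (u, w) ∈ A := by
  rw [mem_closure_iff_nhds_basis ((𝓝 z).basis_sets.prod_nhds (𝓝 y).basis_sets)]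
  simp only [frequently_iff, Prod.forall, Prod.exists, and_imp, id, mem_prod]
  grind

section FanSelection

variable {Z ι : Type*} [TopologicalSpace Z] {z : Z} {f : ι → ℕ → Z}

theorem SequentialFan.prodMk_vertex_mem_closure_iff {E : Set (ι × ℕ)} :
    (z, vertex) ∈ closure ((fun p : ι × ℕ ↦ (f p.1 p.2, point p.1 p.2)) '' E) ↔
      ∀ U ∈ 𝓝 z, ∃ i, ∃ᶠ n in atTop, f i n ∈ U ∧ (i, n) ∈ E := by
  simp [prodMk_mem_closure_iff, frequently_nhds_vertex]

theorem CountablyTight.exists_countable_frequently_mem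
    (ht : CountablyTight (Z × SequentialFan ι))
    (hf : ∀ U ∈ 𝓝 z, ∃ i, ∃ᶠ n in atTop, f i n ∈ U) :
    ∃ I : Set ι, I.Countable ∧ ∀ U ∈ 𝓝 z, ∃ i ∈ I, ∃ᶠ n in atTop, f i n ∈ U := by
  let d (p : ι × ℕ) : Z × SequentialFan ι := (f p.1 p.2, .point p.1 p.2)
  have hd : d.Injective := fun p q hpq ↦
    Prod.ext_iff.2 (SequentialFan.point.inj (congrArg Prod.snd hpq))
  have hz : (z, .vertex) ∈ closure (d '' univ) :=
    SequentialFan.prodMk_vertex_mem_closure_iff.2 (by simpa using hf)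
  obtain ⟨B, hB, hBc, hzB⟩ := ht _ _ hz
  obtain ⟨E, -, rfl⟩ := subset_image_iff.1 hB
  refine ⟨Prod.fst '' E, (countable_of_injective_of_countable_image hd.injOn hBc).image _,
    fun U hU ↦ ?_⟩
  obtain ⟨i, hi⟩ := SequentialFan.prodMk_vertex_mem_closure_iff.1 hzB U hU
  obtain ⟨n, -, hn⟩ := hi.exists
  exact ⟨i, ⟨(i, n), hn, rfl⟩, hi.mono fun _ h ↦ h.1⟩

end FanSelection

section CompletelyRegular

variable {X : Type*} [TopologicalSpace X] [CompletelyRegularSpace X] {K : Set X}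

theorem exists_continuousMap_zero_one_of_isCompact_of_isClosed {T : Set X}
    (hK : IsCompact K) (hT : IsClosed T) (hd : Disjoint K T) :
    ∃ f : C(X, ℝ), EqOn f 0 K ∧ EqOn f 1 T := by
  obtain ⟨S, hS, rfl⟩ := isInducing_stoneCechUnit.isClosed_iff.1 hT
  obtain ⟨f, hf0, hf1, -⟩ := exists_continuous_zero_one_of_isClosed
    (hK.image continuous_stoneCechUnit).isClosed hS (disjoint_image_left.2 hd)
  exact ⟨f.comp ⟨stoneCechUnit, continuous_stoneCechUnit⟩,
    fun x hx ↦ hf0 (mem_image_of_mem _ hx), fun x hx ↦ hf1 hx⟩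

theorem exists_seq_continuousMap_zero_eventually_one {G : Set X}
    (hK : IsCompact K) (hG : IsGδ G) (hKG : K ⊆ G) :
    ∃ f : ℕ → C(X, ℝ), (∀ n, EqOn (f n) 0 K) ∧ ∀ x ∉ G, ∀ᶠ n in atTop, f n x = 1 := by
  obtain ⟨U, hU, rfl⟩ := isGδ_iff_eq_iInter_nat.1 hG
  have hV (n : ℕ) : IsOpen (dissipate U n) := (finite_Iic n).isOpen_biInter fun i _ ↦ hU i
  have hKV (n : ℕ) : K ⊆ dissipate U n := hKG.trans (iInter_subset_dissipate n)
  choose f hf0 hf1 using fun n ↦ exists_continuousMap_zero_one_of_isCompact_of_isClosed hK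
    (hV n).isClosed_compl (disjoint_compl_right_iff_subset.2 (hKV n))
  refine ⟨f, hf0, fun x hx ↦ ?_⟩
  obtain ⟨m, hm⟩ : ∃ m, x ∉ U m := by simpa using hx
  filter_upwards [eventually_ge_atTop m] with n hmn
  exact hf1 n fun hxn ↦ hm (dissipate_subset hmn hxn)

end CompletelyRegular

theorem IsBornology.singleton_mem {X : Type*} {𝔅 : Set (Set X)} (hB : IsBornology 𝔅) (x : X) :
    {x} ∈ 𝔅 := by
  obtain ⟨B, hB𝔅, hxB⟩ : x ∈ ⋃₀ 𝔅 := hB.covers ▸ mem_univ x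
  exact hB.subset_mem hB𝔅 (singleton_subset_iff.2 hxB)

section BornTopology

variable {X : Type u} [TopologicalSpace X] {𝔅 : Set (Set X)}

theorem exists_unifBall_subset_of_mem_nhds (hB : IsBornology 𝔅) {f : CFn X} {s : Set (CFn X)}
    (hs : s ∈ @nhds _ (bornTopology 𝔅 hB) f) : ∃ B ∈ 𝔅, ∃ ε > 0, unifBall f B ε ⊆ s := by
  let := bornTopology 𝔅 hB
  obtain ⟨U, hUs, hU, hfU⟩ := mem_nhds_iff.1 hs
  obtain ⟨B, hB𝔅, ε, hε, hBU⟩ := hU f hfU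
  exact ⟨B, hB𝔅, ε, hε, hBU.trans hUs⟩

theorem continuous_eval_bornTopology (hB : IsBornology 𝔅) (x : X) :
    Continuous[bornTopology 𝔅 hB, _] fun f : CFn X ↦ f.1 x := by
  let := bornTopology 𝔅 hB
  refine continuous_def.2 fun V hV f hfV ↦ ?_
  obtain ⟨ε, hε, hεV⟩ := Metric.isOpen_iff.1 hV _ hfV
  exact ⟨{x}, hB.singleton_mem x, ε, hε, fun g hg ↦ hεV (Metric.mem_ball'.2 (hg x rfl))⟩

end BornTopology

theorem HasCompactBase.isBCover_of_isKCover {X : Type*} [TopologicalSpace X] {𝔅 𝒢 : Set (Set X)}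
    (hcb : HasCompactBase 𝔅) (h𝒢 : IsKCover 𝒢) : IsBCover 𝔅 𝒢 := by
  intro B hB
  obtain ⟨K, -, hK, hBK⟩ := hcb B hB
  obtain ⟨G, hG, hKG⟩ := h𝒢 K hK
  exact ⟨G, hG, hBK.trans hKG⟩

theorem HasCompactBase.exists_seq_zero_eventually_one {X : Type u} [TopologicalSpace X]
    [CompletelyRegularSpace X] {𝔅 𝒢 : Set (Set X)} (hcb : HasCompactBase 𝔅)
    (h𝒢 : ∀ G ∈ 𝒢, IsGDeltaSet G) (hcov : IsBCover 𝔅 𝒢) {B : Set X} (hB : B ∈ 𝔅) :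
    ∃ G ∈ 𝒢, ∃ f : ℕ → CFn X, (∀ n, EqOn (f n).1 0 B) ∧
      ∀ x ∉ G, ∀ᶠ n in atTop, (f n).1 x = 1 := by
  obtain ⟨K, hK𝔅, hK, hBK⟩ := hcb B hB
  obtain ⟨G, hG, hKG⟩ := hcov K hK𝔅
  obtain ⟨f, hf0, hf1⟩ := exists_seq_continuousMap_zero_eventually_one hK (h𝒢 G hG) hKG
  exact ⟨G, hG, fun n ↦ ⟨f n, (f n).continuous⟩, fun n ↦ (hf0 n).mono hBK, hf1⟩

theorem stmt13_general {X : Type u} [TopologicalSpace X] [CompletelyRegularSpace X]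
    {𝔅 𝒢 : Set (Set X)} (hB : IsBornology 𝔅) (hcb : HasCompactBase 𝔅)
    (ht : letI := bornTopology 𝔅 hB; CountablyTight (CFn X × SequentialFan 𝔅))
    (h𝒢 : ∀ G ∈ 𝒢, IsGDeltaSet G) (hcov : IsBCover 𝔅 𝒢) :
    ∃ 𝒢' ⊆ 𝒢, 𝒢'.Countable ∧ ⋃₀ 𝒢' = univ := by
  let := bornTopology 𝔅 hB
  choose G hG f hf0 hf1 using fun B : 𝔅 ↦
    hcb.exists_seq_zero_eventually_one h𝒢 hcov B.2
  have hf : ∀ U ∈ 𝓝 (zeroFn X), ∃ B, ∃ᶠ n in atTop, f B n ∈ U := by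
    intro U hU
    obtain ⟨B, hB𝔅, ε, hε, hBU⟩ := exists_unifBall_subset_of_mem_nhds hB hU
    refine ⟨⟨B, hB𝔅⟩, .of_forall fun n ↦ hBU fun x hx ↦ ?_⟩
    simpa [zeroFn, hf0 ⟨B, hB𝔅⟩ n hx] using hε
  obtain ⟨I, hI, hIf⟩ := ht.exists_countable_frequently_mem hf
  refine ⟨G '' I, image_subset_iff.2 fun B _ ↦ hG B, hI.image G, eq_univ_of_forall fun x ↦ ?_⟩
  have hx : {g : CFn X | g.1 x < 1} ∈ 𝓝 (zeroFn X) :=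
    (continuous_eval_bornTopology hB x).continuousAt.eventually_lt_const zero_lt_one
  obtain ⟨B, hBI, hBx⟩ := hIf _ hx
  refine ⟨G B, mem_image_of_mem G hBI, by_contra fun hxG ↦ ?_⟩
  obtain ⟨n, hlt, heq⟩ := (hBx.and_eventually (hf1 B x hxG)).exists
  exact hlt.ne heq

/-- If there exists a bornology `𝔅` with compact base on `X` such that
`C_𝔅(X)` is productively countably tight, then `X` is an Alster space. -/
theorem stmt13 {X : Type u} [TopologicalSpace X] [T35Space X]
    (h : ∃ (𝔅 : Set (Set X)) (hB : IsBornology 𝔅), HasCompactBase 𝔅 ∧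
      @ProductivelyCountablyTight (CFn X) (bornTopology 𝔅 hB)) :
    Alster X := by
  obtain ⟨𝔅, hB, hcb, hp⟩ := h
  exact fun 𝒢 h𝒢 hK ↦ stmt13_general hB hcb
    (hp _ (countablyTight_of_frechetUrysohnSpace _)) h𝒢 (hcb.isBCover_of_isKCover hK)
end

section
/- The space of irrational numbers (ℝ ∖ ℚ with the subspace topology inherited from ℝ) is not an Alster space. -/
open Set Topology

universe u

/-!
In a perfectly normal space the closed compact sets form a `K`-cover by `Gδ` sets, so if the space
is Alster, it is a union of countably many of them, i.e. σ-compact. But a compact set of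
irrationals is closed in `ℝ` and has empty interior, because the rationals are dense. A σ-compact
set of irrationals is therefore meagre, whereas the set of all irrationals, a dense `Gδ` set, is
not meagre by Baire's theorem.
-/

theorem isGDeltaSet_iff_isGδ {X : Type*} [TopologicalSpace X] {s : Set X} :
    IsGDeltaSet s ↔ IsGδ s :=
  Iff.rfl

theorem isKCover_setOf_isClosed_and_isCompact (X : Type*) [TopologicalSpace X] [R1Space X] :
    IsKCover {K : Set X | IsClosed K ∧ IsCompact K} :=
  fun K hK => ⟨closure K, ⟨isClosed_closure, hK.closure⟩, subset_closure⟩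

theorem Alster.sigmaCompactSpace {X : Type*} [TopologicalSpace X] [PerfectlyNormalSpace X]
    (hX : Alster X) : SigmaCompactSpace X := by
  obtain ⟨𝒦, h𝒦, h𝒦_countable, h𝒦_cover⟩ := hX {K | IsClosed K ∧ IsCompact K}
    (fun K hK => isGDeltaSet_iff_isGδ.2 hK.1.isGδ) (isKCover_setOf_isClosed_and_isCompact X)
  exact .of_countable 𝒦 h𝒦_countable (fun K hK => (h𝒦 hK).2) h𝒦_cover

theorem isMeagre_of_isSigmaCompact_of_dense_compl {X : Type*} [TopologicalSpace X] [T2Space X]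
    {s : Set X} (hs : IsSigmaCompact s) (hsc : Dense sᶜ) : IsMeagre s := by
  obtain ⟨K, hK, rfl⟩ := hs
  refine isMeagre_iUnion fun n => IsNowhereDense.isMeagre ?_
  have hKc : Dense (K n)ᶜ := hsc.mono (compl_subset_compl.2 (subset_iUnion K n))
  exact (hK n).isClosed.isNowhereDense_iff.2 (interior_eq_empty_iff_dense_compl.2 hKc)

theorem dense_compl_setOf_irrational : Dense {x : ℝ | Irrational x}ᶜ :=
  Rat.denseRange_cast.mono (range_subset_iff.2 Rat.not_irrational)

theorem stmt18_general {X : Type*} [TopologicalSpace X] [T6Space X] {s : Set X}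
    (hs : ¬ IsMeagre s) (hsc : Dense sᶜ) : ¬ Alster s := fun hA =>
  hs (isMeagre_of_isSigmaCompact_of_dense_compl
    (isSigmaCompact_iff_sigmaCompactSpace.2 hA.sigmaCompactSpace) hsc)

/-- The space of irrational numbers is not an Alster space. -/
theorem stmt18 : ¬ Alster {x : ℝ // Irrational x} :=
  stmt18_general (not_isMeagre_of_isGδ_of_dense .setOfPred_irrational dense_irrational)
    dense_compl_setOf_irrational
end
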